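/- For every fair-division instance with non-positive valuations there exists a connected allocation A = (A_1,…,A_n) that is EF1P_g^c, i.e., v_i^+(A_i) ≥ v_i^-(A_j) holds for all agents i, j. -/

import Mathlib

/-!
A connected allocation is a choice of `n - 1` cut positions. Each item is subdivided into three
parts, so cuts live on the grid `{0, …, 3 m}`, and every agent gets a utility `util v x y` for the
piece between cuts at `x` and `y`. Three facts give the result.

* Combinatorics. Non-positivity makes an empty piece a favourite piece. So every grid point can be
  labelled by a favourite piece of the agent owning that point, with the label on the boundary of
  the cube `[0, 3 m]^d`, `d = n - 1`, prescribed as in Kuhn's cubical Sperner lemma (`kuhn`). The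
  lemma yields a cell of the Freudenthal (Kuhn) triangulation carrying all `n` labels. A point is
  owned by the agent given by its coordinate sum mod `n`, so the `n` vertices of a cell have
  distinct owners, and each agent gets a different favourite piece (`exists_rainbow_cell`).

* Kuhn's lemma by parity. A cell is encoded by an integer vector `T` with distinct residues mod `d`,
  its vertices being `⌊(T + t) / d⌋` for `0 ≤ t ≤ d`. Crossing a facet is then `T ↦ T ± 1` or an
  affine transposition of residues. A door is a facet carrying all nonzero labels: a cell without
  all labels has an even number of doors, whereas crossing doors is an involution that leaves the
  cube through exactly one door.

* Rounding. In a cell each cut position takes only two adjacent values `z k`, `z k + 1`. If it lies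
  in the first third of an item it is rounded down, in the last third up, and in the middle third
  it is rounded in the same direction as the cut to its left. The utility `util` is designed (as a
  value of the piece or a median of three values) so that, whichever roundings occur, it lies
  between `vminus` and `vplus` of the rounded bundle (`round_bounds`).
-/

/-- A bundle is connected (w.r.t. the path `1, …, m`) if it is an interval
(possibly empty). -/
def IsConnectedBundle (A : Finset ℕ) : Prop := ∃ s t : ℕ, A = Finset.Icc s t

/-- `A` is an allocation of the items `M = {1, …, m}` to the `n` agents:
pairwise disjoint bundles whose union is `M`. -/
def IsAllocation (m : ℕ) {n : ℕ} (A : Fin n → Finset ℕ) : Prop :=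
  (∀ i j : Fin n, i ≠ j → Disjoint (A i) (A j)) ∧
  Finset.univ.biUnion A = Finset.Icc 1 m

/-- `v⁺(A)`: for a nonempty connected bundle `A`, the maximum of `v` over `A`,
`A` minus its smallest element and `A` minus its largest element; `0` on `∅`. -/
def vplus (v : Finset ℕ → ℤ) (A : Finset ℕ) : ℤ :=
  if h : A.Nonempty then
    max (v A) (max (v (A.erase (A.min' h))) (v (A.erase (A.max' h))))
  else 0

/-- `v⁻(A)`: for a nonempty connected bundle `A`, the minimum of `v` over `A`,
`A` minus its smallest element and `A` minus its largest element; `0` on `∅`. -/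
def vminus (v : Finset ℕ → ℤ) (A : Finset ℕ) : ℤ :=
  if h : A.Nonempty then
    min (v A) (min (v (A.erase (A.min' h))) (v (A.erase (A.max' h))))
  else 0


/-! ### Kuhn cells and pivots -/

/-- The `t`-th vertex, `0 ≤ t ≤ d`, of the cell of the Freudenthal triangulation of `ℤ^d` encoded
by `T`. Passing from `t - 1` to `t` increments the coordinates `k` with `d ∣ T k + t`; there is
exactly one such `k` when the `T k` have distinct residues mod `d`. -/
def kuhnVertex {d : ℕ} (T : Fin d → ℤ) (t : ℕ) : Fin d → ℤ := fun k => (T k + t) / d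

/-- The affine transposition exchanging `-t + j d` and `-t - 1 + j d` for every `j`. Applied to
all coordinates of `T` it exchanges the step into vertex `t` with the step out of it. -/
def affSwap (d t : ℕ) (z : ℤ) : ℤ :=
  if (d : ℤ) ∣ z + t then z - 1 else if (d : ℤ) ∣ z + t + 1 then z + 1 else z

lemma affSwap_affSwap {d : ℕ} (hd : 2 ≤ d) (t : ℕ) (z : ℤ) :
    affSwap d t (affSwap d t z) = z := by
  have key : ∀ w : ℤ, (d : ℤ) ∣ w → ¬ (d : ℤ) ∣ w + 1 := fun w h h' => by
    have h1 : (d : ℤ) ∣ 1 := by simpa using dvd_sub h' h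
    have := Int.le_of_dvd one_pos h1
    omega
  unfold affSwap
  by_cases h1 : (d : ℤ) ∣ z + t
  · have h2 : ¬ (d : ℤ) ∣ z - 1 + t := fun h => key _ h (by convert h1 using 1; ring)
    have h3 : (d : ℤ) ∣ z - 1 + t + 1 := by convert h1 using 1; ring
    rw [if_pos h1, if_neg h2, if_pos h3]; ring
  · by_cases h2 : (d : ℤ) ∣ z + t + 1
    · have h3 : (d : ℤ) ∣ z + 1 + t := by convert h2 using 1; ring
      rw [if_neg h1, if_pos h2, if_pos h3]; ring
    · simp [h1, h2]

lemma affSwap_cast {d : ℕ} (t : ℕ) (z : ℤ) :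
    ((affSwap d t z : ℤ) : ZMod d) = Equiv.swap (-(t : ZMod d)) (-(t : ZMod d) - 1) (z : ZMod d) := by
  have e1 : (d : ℤ) ∣ z + t ↔ (z : ZMod d) = -t := by
    rw [← ZMod.intCast_zmod_eq_zero_iff_dvd, eq_neg_iff_add_eq_zero]; push_cast; rfl
  have e2 : (d : ℤ) ∣ z + t + 1 ↔ (z : ZMod d) = -t - 1 := by
    rw [← ZMod.intCast_zmod_eq_zero_iff_dvd, ← neg_add', eq_neg_iff_add_eq_zero]
    push_cast; rw [add_assoc]
  rw [Equiv.swap_apply_def]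
  unfold affSwap
  simp only [e1, e2]
  split_ifs with h1 h2
  · push_cast; rw [h1]
  · push_cast; rw [h2]; ring
  · rfl

/-- An affine transposition at `t` changes no vertex of the cell except the `t`-th one. -/
lemma affSwap_add_ediv {d t s : ℕ} (ht : 0 < t) (htd : t < d) (hs : s ≤ d) (hst : s ≠ t) (z : ℤ) :
    (affSwap d t z + s) / (d : ℤ) = (z + s) / d := by
  have hd : (0 : ℤ) < d := by omega
  have key : ∀ w : ℤ, (d : ℤ) ∣ w + t → ¬ (d : ℤ) ∣ w + s := fun w h h' => by
    have h1 : (d : ℤ) ∣ (s : ℤ) - t := by simpa using dvd_sub h' h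
    have := Int.eq_zero_of_abs_lt_dvd h1 (by rw [abs_lt]; constructor <;> omega)
    omega
  have step : ∀ w : ℤ, ¬ (d : ℤ) ∣ w + 1 → (w + 1) / (d : ℤ) = w / d := fun w h => by
    rw [Int.dvd_iff_emod_eq_zero] at h
    have h1 := Int.mul_ediv_add_emod (w + 1) d
    have h2 := Int.emod_nonneg (w + 1) hd.ne'
    have h3 := Int.emod_lt_of_pos (w + 1) hd
    symm
    rw [Int.ediv_eq_iff_of_pos hd]
    constructor <;> nlinarith [show 1 ≤ (w + 1) % (d : ℤ) by omega]
  unfold affSwap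
  split_ifs with h1 h2
  · have := key _ h1
    have e := step (z - 1 + s) (by convert this using 2; ring)
    rw [← e]; congr 1; ring
  · have := key (z + 1) (by convert h2 using 1; ring)
    have e := step (z + s) (by convert this using 2; ring)
    rw [← e]; congr 1; ring
  · rfl

/-! ### Doors -/

/-- For a cell whose vertices `0, …, d` are labelled by `f`, the facet opposite vertex `t` is a
door if it carries all labels `1, …, d`. -/
def IsDoor (d : ℕ) (f : ℕ → ℕ) (t : ℕ) : Prop :=
  ∀ l, 1 ≤ l → l ≤ d → ∃ s ≤ d, s ≠ t ∧ f s = l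

open Classical in
/-- If the labels of a cell are not all of `0, …, d`, the cell has no door or exactly two: two
vertices share a label, and the doors are the facets opposite those two. -/
lemma even_card_doors {d : ℕ} (f : ℕ → ℕ) (hf : ∀ s ≤ d, f s ≤ d)
    (hns : ¬ ∀ l ≤ d, ∃ s ≤ d, f s = l) :
    Even ((Finset.range (d + 1)).filter (IsDoor d f)).card := by
  by_cases hdoor : ∀ l, 1 ≤ l → l ≤ d → ∃ s ≤ d, f s = l
  swap
  · rw [Finset.filter_false_of_mem]
    · simp
    · intro t _ h
      exact hdoor fun l h1 h2 => let ⟨s, hs, _, e⟩ := h l h1 h2; ⟨s, hs, e⟩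
  have h0 : ∀ s ≤ d, f s ≠ 0 := by
    intro s hs h
    apply hns
    intro l hl
    rcases Nat.eq_zero_or_pos l with rfl | hl0
    · exact ⟨s, hs, h⟩
    · exact hdoor l hl0 hl
  obtain ⟨a, ha, b, hb, hab, hfab⟩ := Finset.exists_ne_map_eq_of_card_lt_of_maps_to
    (s := Finset.range (d + 1)) (t := Finset.Icc 1 d) (f := f) (by simp)
    (fun s hs => by
      have hs' : s ≤ d := by simpa [Nat.lt_succ_iff] using hs
      have := h0 s hs'
      have := hf s hs'
      simp only [Finset.coe_Icc, Set.mem_Icc]; omega)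
  simp only [Finset.mem_range, Nat.lt_succ_iff] at ha hb
  have : (Finset.range (d + 1)).filter (IsDoor d f) = {a, b} := by
    ext t
    simp only [Finset.mem_filter, Finset.mem_range, Nat.lt_succ_iff, Finset.mem_insert, IsDoor,
      Finset.mem_singleton]
    constructor
    · rintro ⟨ht, h⟩
      by_contra hcon
      push Not at hcon
      have hsub : Finset.Icc 1 d ⊆ (((Finset.range (d + 1)).erase t).erase a).image f := by
        intro l hl
        rw [Finset.mem_Icc] at hl
        obtain ⟨s, hs, hst, e⟩ := h l hl.1 hl.2
        rw [Finset.mem_image]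
        by_cases hsa : s = a
        · exact ⟨b, by simp; omega, by rw [← hfab, ← hsa, e]⟩
        · exact ⟨s, by simp; omega, e⟩
      have h1 := (Finset.card_le_card hsub).trans Finset.card_image_le
      rw [Finset.card_erase_of_mem (by simp; omega), Finset.card_erase_of_mem (by simp; omega)] at h1
      simp only [Nat.card_Icc, Finset.card_range] at h1
      omega
    · rintro (rfl | rfl)
      · refine ⟨ha, fun l h1 h2 => ?_⟩
        obtain ⟨s, hs, e⟩ := hdoor l h1 h2
        by_cases hsa : s = t
        · exact ⟨b, hb, hab.symm, by rw [← hfab, ← hsa, e]⟩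
        · exact ⟨s, hs, hsa, e⟩
      · refine ⟨hb, fun l h1 h2 => ?_⟩
        obtain ⟨s, hs, e⟩ := hdoor l h1 h2
        by_cases hsa : s = t
        · exact ⟨a, ha, hab, by rw [hfab, ← hsa, e]⟩
        · exact ⟨s, hs, hsa, e⟩
  rw [this, Finset.card_pair hab]
  exact even_two

/-- `x` lies in the cube `[0, N]^d`. -/
def InCube {d : ℕ} (N : ℤ) (x : Fin d → ℤ) : Prop := ∀ i, 0 ≤ x i ∧ x i ≤ N

/-- `T` encodes a cell of the triangulation contained in the cube `[0, N]^d`: the first vertex is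
nonnegative and the last one, which is the first one plus `(1, …, 1)`, is at most `N`. -/
def IsCell {d : ℕ} (N : ℤ) (T : Fin d → ℤ) : Prop :=
  (∀ k, 0 ≤ T k ∧ T k < d * N) ∧ Function.Injective fun k => (T k : ZMod d)

/-- For a pair (cell, `t`), the cell on the other side of the facet opposite vertex `t`, together
with the index there of the vertex opposite that facet. -/
def pivot {d : ℕ} (p : (Fin d → ℤ) × ℕ) : (Fin d → ℤ) × ℕ :=
  if p.2 = 0 then (fun k => p.1 k + 1, d)
  else if p.2 = d then (fun k => p.1 k - 1, 0)
  else (fun k => affSwap d p.2 (p.1 k), p.2)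

lemma kuhnVertex_mono {d : ℕ} (T : Fin d → ℤ) {s t : ℕ} (h : s ≤ t) :
    kuhnVertex T s ≤ kuhnVertex T t := fun k => by
  unfold kuhnVertex
  have := k.pos
  exact Int.ediv_le_ediv (by omega) (by omega)

lemma kuhnVertex_last {d : ℕ} (T : Fin d → ℤ) (k : Fin d) :
    kuhnVertex T d k = kuhnVertex T 0 k + 1 := by
  have hd : (d : ℤ) ≠ 0 := by have := k.pos; omega
  simp [kuhnVertex, Int.add_ediv_of_dvd_right, Int.ediv_self hd]

lemma IsCell.inCube {d : ℕ} {N : ℤ} {T : Fin d → ℤ} (hT : IsCell N T) {s : ℕ} (hs : s ≤ d) :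
    InCube N (kuhnVertex T s) := fun k => by
  have hd : (0 : ℤ) < d := by have := k.pos; omega
  obtain ⟨h1, h2⟩ := hT.1 k
  constructor
  · exact Int.ediv_nonneg (by omega) hd.le
  · refine (kuhnVertex_mono T hs k).trans ?_
    rw [kuhnVertex_last]
    have : kuhnVertex T 0 k < N := by
      unfold kuhnVertex
      rw [Int.ediv_lt_iff_lt_mul hd]
      push_cast; linarith
    exact this

lemma pivot_pivot {d : ℕ} (hd : 1 ≤ d) {p : (Fin d → ℤ) × ℕ} (hp : p.2 ≤ d) :
    pivot (pivot p) = p := by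
  obtain ⟨T, t⟩ := p
  simp only at hp
  rcases Nat.eq_zero_or_pos t with rfl | h0
  · simp [pivot, show d ≠ 0 by omega]
  · rcases hp.eq_or_lt with rfl | h1
    · simp [pivot, show t ≠ 0 by omega]
    · simp [pivot, h0.ne', h1.ne, affSwap_affSwap (show 2 ≤ d by omega)]

lemma pivot_snd_le {d : ℕ} {p : (Fin d → ℤ) × ℕ} (hp : p.2 ≤ d) : (pivot p).2 ≤ d := by
  unfold pivot; split_ifs <;> simp [hp]

lemma residues_surjective {d : ℕ} (hd : 1 ≤ d) {T : Fin d → ℤ}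
    (hT : Function.Injective fun k => (T k : ZMod d)) (z : ZMod d) : ∃ k, (T k : ZMod d) = z := by
  have : NeZero d := ⟨by omega⟩
  exact ((Fintype.bijective_iff_injective_and_card _).2 ⟨hT, by simp [ZMod.card]⟩).2 z

lemma pivot_ne {d : ℕ} (hd : 1 ≤ d) {p : (Fin d → ℤ) × ℕ} (hp : p.2 ≤ d)
    (hinj : Function.Injective fun k => (p.1 k : ZMod d)) : pivot p ≠ p := by
  obtain ⟨T, t⟩ := p
  simp only at hp hinj
  intro h
  rcases Nat.eq_zero_or_pos t with rfl | h0
  · simp [pivot] at h; omega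
  · rcases hp.eq_or_lt with rfl | h1
    · simp [pivot, show t ≠ 0 by omega] at h; omega
    · simp only [pivot, h0.ne', h1.ne, if_false, Prod.mk.injEq, and_true] at h
      obtain ⟨k, hk⟩ := residues_surjective hd hinj (-(t : ZMod d))
      have h2 := congrFun h k
      have : (d : ℤ) ∣ T k + t := by
        rw [← ZMod.intCast_zmod_eq_zero_iff_dvd]; push_cast; rw [hk]; ring
      simp only [affSwap, if_pos this] at h2
      omega

lemma pivot_injective {d : ℕ} {p : (Fin d → ℤ) × ℕ}
    (hinj : Function.Injective fun k => (p.1 k : ZMod d)) :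
    Function.Injective fun k => ((pivot p).1 k : ZMod d) := by
  unfold pivot
  split_ifs
  · intro a b h; apply hinj; simpa using h
  · intro a b h; apply hinj; simpa using h
  · intro a b h
    simp only [affSwap_cast] at h
    exact hinj (Equiv.injective _ h)

/-- The two cells related by a pivot share the facet that is crossed. -/
lemma pivot_facet {d : ℕ} {p : (Fin d → ℤ) × ℕ} (hp : p.2 ≤ d)
    {s : ℕ} (hs : s ≤ d) (hst : s ≠ p.2) :
    ∃ s' ≤ d, s' ≠ (pivot p).2 ∧ kuhnVertex (pivot p).1 s' = kuhnVertex p.1 s := by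
  obtain ⟨T, t⟩ := p
  simp only at hp hst
  rcases Nat.eq_zero_or_pos t with rfl | h0
  · refine ⟨s - 1, by omega, by simp [pivot]; omega, ?_⟩
    funext k
    simp only [pivot, if_true, kuhnVertex]
    congr 1; omega
  · rcases hp.eq_or_lt with rfl | h1
    · refine ⟨s + 1, by omega, by simp [pivot, show t ≠ 0 by omega], ?_⟩
      funext k
      simp only [pivot, if_true, kuhnVertex, h0.ne', if_false]
      congr 1; push_cast; ring
    · refine ⟨s, hs, by simpa [pivot, h0.ne', h1.ne] using hst, ?_⟩
      funext k
      simp only [pivot, kuhnVertex, h0.ne', h1.ne, if_false]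
      exact affSwap_add_ediv h0 h1 hs hst _

lemma IsDoor.pivot {d : ℕ} {ℓ : (Fin d → ℤ) → ℕ} {p : (Fin d → ℤ) × ℕ} (hp : p.2 ≤ d)
    (h : IsDoor d (fun s => ℓ (kuhnVertex p.1 s)) p.2) :
    IsDoor d (fun s => ℓ (kuhnVertex (pivot p).1 s)) (pivot p).2 := by
  intro l h1 h2
  obtain ⟨s, hs, hst, e⟩ := h l h1 h2
  obtain ⟨s', hs', hst', e'⟩ := pivot_facet hp hs hst
  exact ⟨s', hs', hst', by simp only [e']; exact e⟩

/-- A pivot can leave the cube only at the first or the last vertex. For an intermediate `t` an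
affine transposition never carries `0` to `-1` or `d * N - 1` to `d * N`. -/
lemma pivot_exit {d : ℕ} {N : ℤ} {p : (Fin d → ℤ) × ℕ} (hp : p.2 ≤ d)
    (hT : IsCell N p.1) (h : ¬ IsCell N (pivot p).1) :
    (p.2 = 0 ∧ ∃ k, p.1 k = d * N - 1) ∨ (p.2 = d ∧ ∃ k, p.1 k = 0) := by
  obtain ⟨T, t⟩ := p
  simp only at hp hT
  have hinj := pivot_injective (p := (T, t)) hT.2
  have h' : ∃ k, (pivot (T, t)).1 k < 0 ∨ d * N ≤ (pivot (T, t)).1 k := by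
    by_contra hcon
    push Not at hcon
    exact h ⟨hcon, hinj⟩
  obtain ⟨k, hk⟩ := h'
  obtain ⟨hk1, hk2⟩ := hT.1 k
  simp only at hk1 hk2 ⊢
  rcases Nat.eq_zero_or_pos t with rfl | h0
  · simp only [pivot, if_true] at hk
    exact Or.inl ⟨rfl, k, by omega⟩
  · rcases hp.eq_or_lt with rfl | h1
    · simp only [pivot, if_true, h0.ne', if_false] at hk
      exact Or.inr ⟨rfl, k, by omega⟩
    · exfalso
      simp only [pivot, h0.ne', h1.ne, if_false, affSwap] at hk
      split_ifs at hk with hd1 hd2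
      · have : T k = 0 := by omega
        rw [this] at hd1
        have := Int.le_of_dvd (by omega) hd1
        omega
      · have : T k = d * N - 1 := by omega
        rw [this] at hd2
        have hd3 : (d : ℤ) ∣ t := by
          rw [show (t : ℤ) = (d * N - 1 + t + 1) - d * N by ring]
          exact dvd_sub hd2 (dvd_mul_right (d : ℤ) N)
        have := Int.le_of_dvd (by omega) hd3
        omega
      · omega

/-- Kuhn's cubical form of Sperner's lemma: if label `i + 1` is avoided where `x i = 0`, and the
label is `i + 1` where `i` is the last coordinate equal to `N`, then some cell of the triangulation
carries all the labels `0, …, d`. -/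
lemma kuhn (d : ℕ) (N : ℤ) (hN : 0 < N) (ℓ : (Fin d → ℤ) → ℕ)
    (hle : ∀ x, InCube N x → ℓ x ≤ d)
    (h0 : ∀ x, InCube N x → ∀ i, x i = 0 → ℓ x ≠ i + 1)
    (h1 : ∀ x, InCube N x → ∀ i, x i = N → (∀ j > i, x j ≠ N) → ℓ x = i + 1) :
    ∃ c : ℕ → Fin d → ℤ, (∀ s ≤ d, InCube N (c s)) ∧ (∀ s t, s ≤ t → c s ≤ c t) ∧
      (∀ k, c d k = c 0 k + 1) ∧ ∀ l ≤ d, ∃ s ≤ d, ℓ (c s) = l := by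
  classical
  suffices H : ∃ T : Fin d → ℤ, IsCell N T ∧ ∀ l ≤ d, ∃ s ≤ d, ℓ (kuhnVertex T s) = l by
    obtain ⟨T, hT, hl⟩ := H
    exact ⟨kuhnVertex T, fun s hs => hT.inCube hs, fun s t h => kuhnVertex_mono T h,
      kuhnVertex_last T, hl⟩
  rcases Nat.eq_zero_or_pos d with rfl | hd
  · refine ⟨fun _ => 0, ⟨fun k => k.elim0, fun k => k.elim0⟩, fun l hl => ⟨0, le_rfl, ?_⟩⟩
    have := hle (kuhnVertex (fun _ => 0) 0) (fun k => k.elim0)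
    omega
  by_contra hcon
  push Not at hcon
  have hdz : (0 : ℤ) < d := by omega
  have hmax : ∀ x, InCube N x → ∀ i, x i = N →
      ∃ j, i ≤ j ∧ x j = N ∧ (∀ j' > j, x j' ≠ N) ∧ ℓ x = j + 1 := by
    intro x hx i hi
    have hne : (Finset.univ.filter fun j => x j = N).Nonempty := ⟨i, by simp [hi]⟩
    set j := (Finset.univ.filter fun j => x j = N).max' hne with hj
    have hjm := Finset.max'_mem _ hne
    rw [← hj] at hjm
    have hjN : x j = N := by simpa using hjm
    have hj' : ∀ j' > j, x j' ≠ N := fun j' hlt he => by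
      have := Finset.le_max' (Finset.univ.filter fun j => x j = N) j' (by simp [he])
      exact absurd hlt (not_lt.2 this)
    exact ⟨j, Finset.le_max' _ _ (by simp [hi]), hjN, hj', h1 x hx j hjN hj'⟩
  set cells : Finset (Fin d → ℤ) :=
    (Fintype.piFinset fun _ : Fin d => Finset.Ico (0 : ℤ) (d * N)).filter (IsCell N) with hcells
  have mem_cells : ∀ T, T ∈ cells ↔ IsCell N T := fun T => by
    simp only [hcells, Finset.mem_filter, Fintype.mem_piFinset, Finset.mem_Ico]
    exact ⟨fun h => h.2, fun h => ⟨h.1, h⟩⟩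
  -- All pairs (cell in the cube, door of that cell).
  set S : Finset ((Fin d → ℤ) × ℕ) := (cells ×ˢ Finset.range (d + 1)).filter
    fun p => IsDoor d (fun s => ℓ (kuhnVertex p.1 s)) p.2 with hS
  have mem_S : ∀ p, p ∈ S ↔ IsCell N p.1 ∧ p.2 ≤ d ∧
      IsDoor d (fun s => ℓ (kuhnVertex p.1 s)) p.2 := fun p => by
    simp only [hS, Finset.mem_filter, Finset.mem_product, mem_cells, Finset.mem_range,
      Nat.lt_succ_iff, and_assoc]
  have hSeven : Even S.card := by
    rw [Finset.card_eq_sum_card_fiberwise (f := Prod.fst) (t := cells)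
      (fun p hp => (mem_cells _).2 ((mem_S p).1 hp).1)]
    refine Finset.even_sum _ fun T hT => ?_
    rw [mem_cells] at hT
    have hev := even_card_doors (d := d) (fun s => ℓ (kuhnVertex T s))
      (fun s hs => hle _ (hT.inCube hs)) (by simpa using hcon T hT)
    refine (congrArg Even (Finset.card_bij (fun p _ => p.2) ?_ ?_ ?_)).mpr hev
    · rintro ⟨T', t⟩ hp
      simp only [Finset.mem_filter, mem_S] at hp
      obtain ⟨⟨_, h2, h3⟩, rfl⟩ := hp
      simp only [Finset.mem_filter, Finset.mem_range, Nat.lt_succ_iff]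
      exact ⟨h2, h3⟩
    · rintro ⟨T', t⟩ hp ⟨T'', t'⟩ hp' h
      simp only [Finset.mem_filter] at hp hp'
      simp only at h
      rw [h, show T' = T'' from hp.2.trans hp'.2.symm]
    · intro t ht
      simp only [Finset.mem_filter, Finset.mem_range, Nat.lt_succ_iff] at ht
      exact ⟨(T, t), by simp only [Finset.mem_filter, mem_S]; exact ⟨⟨hT, ht.1, ht.2⟩, trivial⟩, rfl⟩
  -- The only door through which the cube can be left: its vertices have label `s` for
  -- `s = 1, …, d`, the `s`-th one having the first `s` coordinates `N` and the others `N - 1`.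
  set p₀ : (Fin d → ℤ) × ℕ := (fun k => d * N - k - 1, 0) with hp₀
  have hdN : (d : ℤ) ≤ d * N := by nlinarith
  have hp₀cell : IsCell N p₀.1 := by
    refine ⟨fun k => ?_, fun a b hab => ?_⟩
    · have := k.2
      simp only [hp₀]
      constructor <;> omega
    · simp only [hp₀] at hab
      rw [ZMod.intCast_eq_intCast_iff_dvd_sub] at hab
      have h2 := a.2
      have h3 := b.2
      have := Int.eq_zero_of_abs_lt_dvd hab (by rw [abs_lt]; constructor <;> omega)
      apply Fin.ext; omega
  have hv₀ : ∀ (s : ℕ) (k : Fin d), kuhnVertex p₀.1 s k = N + ((s : ℤ) - k - 1) / d := by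
    intro s k
    simp only [hp₀, kuhnVertex]
    rw [show (d : ℤ) * N - k - 1 + s = (s - k - 1) + d * N by ring,
      Int.add_mul_ediv_left _ _ hdz.ne', add_comm]
  have hp₀S : p₀ ∈ S := by
    refine (mem_S _).2 ⟨hp₀cell, by simp [hp₀], fun l hl1 hl2 => ⟨l, hl2, by simp [hp₀]; omega, ?_⟩⟩
    have := h1 _ (hp₀cell.inCube hl2) ⟨l - 1, by omega⟩ ?_ ?_
    · simp only [this]; omega
    · rw [hv₀, Int.ediv_eq_zero_of_lt] <;> simp <;> omega
    · intro j hj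
      rw [hv₀]
      have h2 : l - 1 < (j : ℕ) := hj
      have : ((l : ℤ) - j - 1) / d < 0 := Int.ediv_neg_of_neg_of_pos (by omega) hdz
      omega
  have hexit : ∀ p ∈ S, ¬ IsCell N (pivot p).1 → p = p₀ := by
    intro p hp hout
    obtain ⟨hc, hle', hdoor⟩ := (mem_S p).1 hp
    obtain ⟨T, t⟩ := p
    simp only at hc hle' hdoor
    rcases pivot_exit hle' hc hout with ⟨ht, i, hi⟩ | ⟨ht, i, hi⟩
    · simp only at ht hi
      subst ht
      -- The facet lies in a face `x i = N`, where labels determine the last coordinate equal to `N`.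
      have hfac : ∀ s, 1 ≤ s → s ≤ d → kuhnVertex T s i = N := by
        intro s hs1 hs2
        simp only [kuhnVertex, hi]
        rw [show (d : ℤ) * N - 1 + s = (s - 1) + d * N by ring,
          Int.add_mul_ediv_left _ _ hdz.ne', Int.ediv_eq_zero_of_lt (by omega) (by omega), zero_add]
      have hlab : ∀ k : Fin d, ∃ s : ℕ, 1 ≤ s ∧ s ≤ d ∧ kuhnVertex T s k = N ∧
          ∀ j > k, kuhnVertex T s j ≠ N := by
        intro k
        obtain ⟨s, hs, hs0, e⟩ := hdoor (k + 1) (by omega) (by omega)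
        obtain ⟨j, _, hj1, hj2, hj3⟩ := hmax _ (hc.inCube hs) i (hfac s (by omega) hs)
        have : j = k := Fin.ext (by simp only at e; omega)
        subst this
        exact ⟨s, by omega, hs, hj1, hj2⟩
      choose σ hσ1 hσd hσN hσlt using hlab
      have hσmono : ∀ k k', k < k' → σ k < σ k' := by
        intro k k' hlt
        by_contra hge
        push Not at hge
        have a1 := kuhnVertex_mono T hge k'
        rw [hσN k'] at a1
        exact hσlt k k' hlt (le_antisymm ((hc.inCube (hσd k)) k').2 a1)
      have hσlow : ∀ (n : ℕ) (hn : n < d), n + 1 ≤ σ ⟨n, hn⟩ := by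
        intro n
        induction n with
        | zero => intro hn; exact hσ1 _
        | succ n ih =>
          intro hn
          have := ih (by omega)
          have := hσmono ⟨n, by omega⟩ ⟨n + 1, hn⟩ (by simp)
          omega
      have hσhigh : ∀ (n : ℕ) (hn : n < d), σ ⟨d - 1 - n, by omega⟩ ≤ d - n := by
        intro n
        induction n with
        | zero => intro hn; exact hσd _
        | succ n ih =>
          intro hn
          have := ih (by omega)
          have := hσmono ⟨d - 1 - (n + 1), by omega⟩ ⟨d - 1 - n, by omega⟩ (by simp; omega)
          omega
      -- `σ` is strictly increasing from `Fin d` into `{1, …, d}`.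
      have hσeq : ∀ k : Fin d, σ k = k + 1 := by
        intro k
        have hk := k.2
        have a1 := hσlow k hk
        have a2 := hσhigh (d - 1 - k) (by omega)
        have a3 : (⟨d - 1 - (d - 1 - k), by omega⟩ : Fin d) = k := Fin.ext (by simp; omega)
        rw [a3] at a2
        simp only [Fin.eta] at a1
        omega
      have hTk : ∀ k, T k = d * N - k - 1 := by
        intro k
        have b1 := hσN k
        rw [hσeq] at b1
        have b2 : kuhnVertex T k k < N := by
          by_cases hk : (k : ℕ) = 0
          · have := kuhnVertex_last T k
            have := (hc.inCube le_rfl k).2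
            rw [hk]; omega
          · have hk' := hσlt ⟨k - 1, by omega⟩ k (by rw [gt_iff_lt, Fin.lt_def]; simp; omega)
            rw [hσeq] at hk'
            simp only [show (k : ℕ) - 1 + 1 = k by omega] at hk'
            exact lt_of_le_of_ne ((hc.inCube k.2.le) k).2 hk'
        simp only [kuhnVertex] at b1 b2
        rw [Int.ediv_lt_iff_lt_mul hdz] at b2
        rw [Int.ediv_eq_iff_of_pos hdz] at b1
        push_cast at b1
        have := b1.1
        rw [mul_comm N] at *
        omega
      simp only [hp₀, Prod.mk.injEq, and_true]
      exact funext hTk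
    · exfalso
      -- The facet lies in a face `x i = 0`, where the label `i + 1` is missing.
      simp only at ht hi
      obtain ⟨s, hs, hst, e⟩ := hdoor (i + 1) (by omega) (by omega)
      refine h0 _ (hc.inCube hs) i ?_ e
      simp only [kuhnVertex, hi]
      exact Int.ediv_eq_zero_of_lt (by omega) (by omega)
  have hp₀out : ¬ IsCell N (pivot p₀).1 := by
    intro h
    have := (h.1 ⟨0, hd⟩).2
    simp [pivot, hp₀] at this
  have hsum : ∑ p ∈ S.erase p₀, (1 : ZMod 2) = 0 := by
    refine Finset.sum_involution (fun p _ => pivot p) ?_ ?_ ?_ ?_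
    · intros; decide
    · intro p hp _
      obtain ⟨hc, hle', _⟩ := (mem_S p).1 (Finset.mem_of_mem_erase hp)
      exact pivot_ne hd hle' hc.2
    · intro p hp
      have hpS := Finset.mem_of_mem_erase hp
      obtain ⟨hc, hle', hdoor⟩ := (mem_S p).1 hpS
      rw [Finset.mem_erase]
      refine ⟨fun he => hp₀out ?_, (mem_S _).2 ⟨?_, pivot_snd_le hle', hdoor.pivot hle'⟩⟩
      · rw [← he, pivot_pivot hd hle']; exact hc
      · by_contra hout
        exact Finset.ne_of_mem_erase hp (hexit p hpS hout)
    · intro p hp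
      exact pivot_pivot hd ((mem_S p).1 (Finset.mem_of_mem_erase hp)).2.1
  have hev : Even (S.erase p₀).card := by
    rw [Finset.sum_const, nsmul_one, ZMod.natCast_eq_zero_iff] at hsum
    exact even_iff_two_dvd.2 hsum
  rw [Finset.card_erase_of_mem hp₀S] at hev
  have hpos := Finset.card_pos.2 ⟨p₀, hp₀S⟩
  rcases hSeven with ⟨a, ha⟩
  rcases hev with ⟨b, hb⟩
  omega

/-! ### Utilities of fractional pieces and rounding -/

/-- The median of three integers. -/
def med3 (p q r : ℤ) : ℤ := max (min p q) (min (max p q) r)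

/-- The utility of the piece between grid cuts at `x` and `y`, where cuts at `3 a` lie between the
items `a` and `a + 1`. An item that `x` or `y` cuts through does not count,
except that when `x` is inside an item and `y` is at two thirds of an item the median of the values
of three roundings is taken. -/
def util (v : Finset ℕ → ℤ) (x y : ℕ) : ℤ :=
  if x % 3 = 0 then v (Finset.Ioc (x / 3) (y / 3))
  else if y % 3 = 2 then
    med3 (v (Finset.Ioc (x / 3) (y / 3))) (v (Finset.Ioc (x / 3 + 1) (y / 3)))
      (v (Finset.Ioc (x / 3 + 1) (y / 3 + 1)))
  else v (Finset.Ioc (x / 3 + 1) (y / 3))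

lemma erase_min'_Ioc {p q : ℕ} (h : (Finset.Ioc p q).Nonempty) :
    (Finset.Ioc p q).erase ((Finset.Ioc p q).min' h) = Finset.Ioc (p + 1) q := by
  have hpq : p < q := Finset.nonempty_Ioc.1 h
  have : (Finset.Ioc p q).min' h = p + 1 := by
    apply le_antisymm
    · exact Finset.min'_le _ _ (by simp; omega)
    · exact Finset.le_min' _ _ _ fun y hy => by simp at hy; omega
  rw [this]; ext a; simp; omega

lemma erase_max'_Ioc {p q : ℕ} (h : (Finset.Ioc p q).Nonempty) :
    (Finset.Ioc p q).erase ((Finset.Ioc p q).max' h) = Finset.Ioc p (q - 1) := by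
  have hpq : p < q := Finset.nonempty_Ioc.1 h
  have : (Finset.Ioc p q).max' h = q := by
    apply le_antisymm
    · exact Finset.max'_le _ _ _ fun y hy => by simp at hy; omega
    · exact Finset.le_max' _ _ (by simp; omega)
  rw [this]; ext a; simp; omega

/-- `v⁻` and `v⁺` bound the value of an interval and of its two truncations. Since `v ∅ = 0`, this
also holds for empty intervals. -/
lemma vpm_bounds (v : Finset ℕ → ℤ) (hv : v ∅ = 0) (p q : ℕ) :
    (vminus v (Finset.Ioc p q) ≤ v (Finset.Ioc p q) ∧
      v (Finset.Ioc p q) ≤ vplus v (Finset.Ioc p q)) ∧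
    (vminus v (Finset.Ioc p q) ≤ v (Finset.Ioc (p + 1) q) ∧
      v (Finset.Ioc (p + 1) q) ≤ vplus v (Finset.Ioc p q)) ∧
    (vminus v (Finset.Ioc p q) ≤ v (Finset.Ioc p (q - 1)) ∧
      v (Finset.Ioc p (q - 1)) ≤ vplus v (Finset.Ioc p q)) := by
  unfold vminus vplus
  by_cases h : (Finset.Ioc p q).Nonempty
  · simp only [dif_pos h, erase_min'_Ioc, erase_max'_Ioc]
    omega
  · have hqp : q ≤ p := by simpa using h
    rw [Finset.Ioc_eq_empty_of_le hqp, Finset.Ioc_eq_empty_of_le (show q ≤ p + 1 by omega),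
      Finset.Ioc_eq_empty_of_le (show q - 1 ≤ p by omega)]
    simp [hv]

/-- Rounding directions of the cuts `z 0, z 1, …`: down (`0`) in the first third of an item, up
(`1`) in the last third, and the direction of the preceding cut in the middle third. Cut `k` is
rounded to `z k / 3 + roundUp z k`. -/
def roundUp (z : ℕ → ℕ) : ℕ → ℕ
  | 0 => 0
  | k + 1 => if z (k + 1) % 3 = 0 then 0 else if z (k + 1) % 3 = 2 then 1 else roundUp z k

lemma roundUp_le (z : ℕ → ℕ) (k : ℕ) : roundUp z k ≤ 1 := by
  induction k with
  | zero => simp [roundUp]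
  | succ k ih => unfold roundUp; split_ifs <;> omega

lemma roundUp_of_mod_zero {z : ℕ → ℕ} {k : ℕ} (h : z k % 3 = 0) : roundUp z k = 0 := by
  cases k <;> simp [roundUp, h]

lemma roundUp_of_mod_two {z : ℕ → ℕ} (h0 : z 0 = 0) {k : ℕ} (h : z k % 3 = 2) :
    roundUp z k = 1 := by
  cases k with
  | zero => simp [h0] at h
  | succ k => simp [roundUp, h]

lemma roundUp_of_mod_one {z : ℕ → ℕ} {k : ℕ} (h : z (k + 1) % 3 = 1) :
    roundUp z (k + 1) = roundUp z k := by
  simp [roundUp, h]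

lemma round_mono {z : ℕ → ℕ} (h0 : z 0 = 0) {k : ℕ} (hz : z k ≤ z (k + 1)) :
    z k / 3 + roundUp z k ≤ z (k + 1) / 3 + roundUp z (k + 1) := by
  have h1 := roundUp_le z k
  have h2 := roundUp_le z (k + 1)
  by_cases hlt : z k / 3 < z (k + 1) / 3
  · omega
  have hcase : z (k + 1) % 3 = 0 ∨ z (k + 1) % 3 = 1 ∨ z (k + 1) % 3 = 2 := by omega
  rcases hcase with h | h | h
  · have := roundUp_of_mod_zero (show z k % 3 = 0 by omega)
    omega
  · have := roundUp_of_mod_one h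
    omega
  · have := roundUp_of_mod_two h0 h
    omega

/-- If the two cuts bounding a piece are at most one grid step above `z k` and `z (k + 1)`, then the
utility of the piece lies between `v⁻` and `v⁺` of the rounded bundle. -/
lemma round_bounds (v : Finset ℕ → ℤ) (hv : v ∅ = 0) {z : ℕ → ℕ} (h0 : z 0 = 0) (k : ℕ)
    {x y : ℕ} (hx : z k ≤ x ∧ x ≤ z k + 1) (hy : z (k + 1) ≤ y ∧ y ≤ z (k + 1) + 1) :
    vminus v (Finset.Ioc (z k / 3 + roundUp z k) (z (k + 1) / 3 + roundUp z (k + 1))) ≤ util v x y ∧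
    util v x y ≤
      vplus v (Finset.Ioc (z k / 3 + roundUp z k) (z (k + 1) / 3 + roundUp z (k + 1))) := by
  have hb := vpm_bounds v hv (z k / 3 + roundUp z k) (z (k + 1) / 3 + roundUp z (k + 1))
  generalize hvm : vminus v _ = vm at *
  generalize hvp : vplus v _ = vp at *
  clear hvm hvp
  have e1 := roundUp_le z k
  have hz0 := roundUp_of_mod_zero (z := z) (k := k)
  have hz2 := roundUp_of_mod_two h0 (k := k)
  have hw0 := roundUp_of_mod_zero (z := z) (k := k + 1)
  have hw1 := roundUp_of_mod_one (z := z) (k := k)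
  have hw2 := roundUp_of_mod_two h0 (k := k + 1)
  generalize roundUp z k = e at *
  generalize roundUp z (k + 1) = f at *
  generalize hZ : z k = Z at *
  generalize hW : z (k + 1) = W at *
  clear hZ hW h0 hv z
  -- What remains is a finite check on the thirds in which `x` and `y` lie and on the roundings
  -- `e` and `f`; the two disjunctions below list the possible combinations.
  obtain ⟨a, ha⟩ : ∃ a, Z / 3 = a := ⟨_, rfl⟩
  obtain ⟨b, hbW⟩ : ∃ b, W / 3 = b := ⟨_, rfl⟩
  rw [ha, hbW] at hb
  have he : e = 0 ∨ e = 1 := by omega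
  have hf : f = 0 ∨ f = 1 := by omega
  have hxc : x / 3 = a ∧ x % 3 = 0 ∧ e = 0 ∨ x / 3 = a ∧ x % 3 ≠ 0 ∨
    x / 3 = a + 1 ∧ x % 3 = 0 ∧ e = 1 := by omega
  have hyc : y / 3 = b ∧ y % 3 ≠ 2 ∧ f = 0 ∨ y / 3 = b ∧ y % 3 ≠ 2 ∧ f = 1 ∧ e = 1 ∨
    y / 3 = b ∧ y % 3 = 2 ∧ (f = 1 ∨ e = 0) ∨
    y / 3 = b + 1 ∧ y % 3 = 0 ∧ f = 1 := by omega
  unfold util med3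
  rcases hxc with ⟨hx1, hx2, hx3⟩ | ⟨hx1, hx2⟩ | ⟨hx1, hx2, hx3⟩ <;>
  rcases hyc with ⟨hy1, hy2, hy3⟩ | ⟨hy1, hy2, hy3, hy4⟩ | ⟨hy1, hy2, hy3⟩ | ⟨hy1, hy2, hy3⟩ <;>
  rcases he with rfl | rfl <;> rcases hf with rfl | rfl <;>
  simp only [hx1, hx2, hy1, hy2, if_true, if_false] <;>
  simp only [add_zero, Nat.add_sub_cancel] at hb <;> omega

/-! ### Labelling by favourite pieces -/

/-- The cuts encoded by a point of the cube: cut `0` is at `0`, cut `k` for `1 ≤ k ≤ d` is at the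
largest of the first `k` coordinates, and cut `d + 1` is at `N`. Taking running maxima retracts the
cube onto the simplex of nondecreasing cut sequences. -/
def cuts {d : ℕ} (N : ℕ) (x : Fin d → ℤ) : ℕ → ℕ
  | 0 => 0
  | k + 1 => max (cuts N x k) (if h : k < d then (x ⟨k, h⟩).toNat else N)

lemma cuts_succ_of_lt {d : ℕ} (N : ℕ) (x : Fin d → ℤ) (k : Fin d) :
    cuts N x (k + 1) = max (cuts N x k) (x k).toNat := by
  simp [cuts]

lemma cuts_le_succ {d : ℕ} (N : ℕ) (x : Fin d → ℤ) (k : ℕ) :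
    cuts N x k ≤ cuts N x (k + 1) := le_max_left _ _

lemma cuts_le {d : ℕ} {N : ℕ} {x : Fin d → ℤ} (hx : InCube N x) (k : ℕ) : cuts N x k ≤ N := by
  induction k with
  | zero => simp [cuts]
  | succ k ih =>
    unfold cuts
    refine max_le ih ?_
    split_ifs with h
    · have := (hx ⟨k, h⟩).2
      omega
    · exact le_rfl

lemma cuts_last {d : ℕ} {N : ℕ} {x : Fin d → ℤ} (hx : InCube N x) : cuts N x (d + 1) = N := by
  refine le_antisymm (cuts_le hx _) ?_
  simp [cuts]

lemma cuts_mono {d : ℕ} (N : ℕ) {x y : Fin d → ℤ} (h : x ≤ y) (k : ℕ) :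
    cuts N x k ≤ cuts N y k := by
  induction k with
  | zero => simp [cuts]
  | succ k ih =>
    unfold cuts
    refine max_le_max ih ?_
    split_ifs with hk
    · exact Int.toNat_le_toNat (h _)
    · exact le_rfl

lemma cuts_le_add_one {d : ℕ} {N : ℕ} {x y : Fin d → ℤ} (h : ∀ i, y i ≤ x i + 1) (k : ℕ) :
    cuts N y k ≤ cuts N x k + 1 := by
  induction k with
  | zero => simp [cuts]
  | succ k ih =>
    unfold cuts
    split_ifs with hk
    · have := h ⟨k, hk⟩
      omega
    · omega

lemma util_self (v : Finset ℕ → ℤ) (hv : v ∅ = 0) (x : ℕ) : util v x x = 0 := by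
  unfold util
  split_ifs <;> simp [hv, med3]

lemma util_nonpos {m : ℕ} {v : Finset ℕ → ℤ} (hv : ∀ S ⊆ Finset.Icc 1 m, v S ≤ 0) {x y : ℕ}
    (hy : y ≤ 3 * m) : util v x y ≤ 0 := by
  have key : ∀ p q, q ≤ m → v (Finset.Ioc p q) ≤ 0 := fun p q hq => hv _ fun a ha => by
    simp at ha ⊢; omega
  unfold util med3
  split_ifs with h1 h2
  · exact key _ _ (by omega)
  · have := key (x / 3) (y / 3) (by omega)
    have := key (x / 3 + 1) (y / 3) (by omega)
    have := key (x / 3 + 1) (y / 3 + 1) (by omega)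
    omega
  · exact key _ _ (by omega)

/-- Every grid point of the cube has a favourite piece obeying the boundary conditions of `kuhn`.
If `x i = N`, piece `i + 1` is empty; if `x i = 0`, piece `i` is empty; an empty piece is a
favourite since utilities are nonpositive. The label uses the last `i` of the first kind, or else
the first `i` of the second kind. -/
lemma exists_label {d m : ℕ} (hm : 0 < m) (v : Finset ℕ → ℤ) (hv0 : v ∅ = 0)
    (hv : ∀ S ⊆ Finset.Icc 1 m, v S ≤ 0) (x : Fin d → ℤ) (hx : InCube (3 * m : ℕ) x) :
    ∃ l ≤ d, (∀ j ≤ d, util v (cuts (3 * m) x j) (cuts (3 * m) x (j + 1)) ≤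
        util v (cuts (3 * m) x l) (cuts (3 * m) x (l + 1))) ∧
      (∀ i, x i = 0 → l ≠ i + 1) ∧
      (∀ i, x i = (3 * m : ℕ) → (∀ j > i, x j ≠ (3 * m : ℕ)) → l = i + 1) := by
  classical
  have hempty : ∀ l, cuts (3 * m) x l = cuts (3 * m) x (l + 1) →
      ∀ j ≤ d, util v (cuts (3 * m) x j) (cuts (3 * m) x (j + 1)) ≤
        util v (cuts (3 * m) x l) (cuts (3 * m) x (l + 1)) := by
    intro l hl j _
    rw [← hl, util_self v hv0]
    exact util_nonpos hv (cuts_le hx _)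
  by_cases hN : ∃ i, x i = (3 * m : ℕ)
  · obtain ⟨i, hi, himax⟩ := (Finset.univ.filter fun i => x i = (3 * m : ℕ)).exists_maximal
      (by obtain ⟨i, hi⟩ := hN; exact ⟨i, by simp [hi]⟩)
    simp only [Finset.mem_filter, Finset.mem_univ, true_and] at hi himax
    have hcut : cuts (3 * m) x (i + 1) = 3 * m := by
      refine le_antisymm (cuts_le hx _) ?_
      rw [cuts_succ_of_lt, hi]
      simp
    refine ⟨i + 1, by omega, hempty _ ?_, ?_, ?_⟩
    · exact le_antisymm (cuts_le_succ _ _ _) (by rw [hcut]; exact cuts_le hx _)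
    · intro j hj he
      have : i = j := Fin.ext (by omega)
      subst this
      omega
    · intro j hj hjmax
      rcases lt_trichotomy i j with h | h | h
      · exact absurd (himax hj h.le) (not_le.2 h)
      · rw [h]
      · exact absurd hi (hjmax i h)
  · push Not at hN
    by_cases hZ : ∃ i, x i = 0
    · obtain ⟨i, hi, himin⟩ := (Finset.univ.filter fun i => x i = 0).exists_minimal
        (by obtain ⟨i, hi⟩ := hZ; exact ⟨i, by simp [hi]⟩)
      simp only [Finset.mem_filter, Finset.mem_univ, true_and] at hi himin
      refine ⟨i, by omega, hempty _ ?_, ?_, fun j hj => absurd hj (hN j)⟩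
      · rw [cuts_succ_of_lt, hi]; simp
      · intro j hj he
        have hlt : j < i := by rw [Fin.lt_def]; omega
        exact absurd (himin hj hlt.le) (not_le.2 hlt)
    · push Not at hZ
      obtain ⟨l, hl, hmax⟩ := (Finset.range (d + 1)).exists_max_image
        (fun j => util v (cuts (3 * m) x j) (cuts (3 * m) x (j + 1))) ⟨0, by simp⟩
      simp only [Finset.mem_range, Nat.lt_succ_iff] at hl hmax
      exact ⟨l, hl, hmax, fun i hi => absurd hi (hZ i), fun i hi => absurd hi (hN i)⟩

/-- The agent owning a grid point: the sum of its coordinates modulo the number of agents. -/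
def owner {d : ℕ} (x : Fin d → ℤ) : Fin (d + 1) :=
  ⟨((∑ i, x i) % (d + 1 : ℤ)).toNat, by
    have h1 := Int.emod_nonneg (∑ i, x i) (show (d + 1 : ℤ) ≠ 0 by omega)
    have h2 := Int.emod_lt_of_pos (∑ i, x i) (show (0 : ℤ) < d + 1 by omega)
    omega⟩

lemma owner_ne {d : ℕ} {x y : Fin d → ℤ} (h1 : ∑ i, x i < ∑ i, y i)
    (h2 : ∑ i, y i ≤ ∑ i, x i + d) : owner x ≠ owner y := by
  intro h
  have h := congrArg Fin.val h
  simp only [owner] at h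
  have a1 := Int.emod_nonneg (∑ i, x i) (show (d + 1 : ℤ) ≠ 0 by omega)
  have a2 := Int.emod_nonneg (∑ i, y i) (show (d + 1 : ℤ) ≠ 0 by omega)
  have h3 : (∑ i, x i) % (d + 1 : ℤ) = (∑ i, y i) % (d + 1 : ℤ) := by omega
  have h4 : (d + 1 : ℤ) ∣ ∑ i, y i - ∑ i, x i := Int.ModEq.dvd h3
  have := Int.le_of_dvd (by omega) h4
  omega

/-- Some cell gives each agent `i` a cut sequence `p i`, within one grid step of a common sequence
`z`, for which piece `κ i` is a favourite of agent `i`; here `κ` is a bijection. -/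
lemma exists_rainbow_cell {d m : ℕ} (hm : 0 < m) (v : Fin (d + 1) → Finset ℕ → ℤ)
    (hv0 : ∀ i, v i ∅ = 0) (hv : ∀ i, ∀ S ⊆ Finset.Icc 1 m, v i S ≤ 0) :
    ∃ (z : ℕ → ℕ) (p : Fin (d + 1) → ℕ → ℕ) (κ : Equiv.Perm (Fin (d + 1))),
      z 0 = 0 ∧ z (d + 1) = 3 * m ∧ (∀ k, z k ≤ z (k + 1)) ∧
      (∀ i k, z k ≤ p i k ∧ p i k ≤ z k + 1) ∧
      ∀ i j, util (v i) (p i (κ j)) (p i (κ j + 1)) ≤ util (v i) (p i (κ i)) (p i (κ i + 1)) := by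
  classical
  have hlab : ∀ x : Fin d → ℤ, ∃ l : ℕ, InCube (3 * m : ℕ) x → _ := fun x => by
    by_cases hx : InCube (3 * m : ℕ) x
    · obtain ⟨l, hl⟩ := exists_label hm (v (owner x)) (hv0 _) (hv _) x hx
      exact ⟨l, fun _ => hl⟩
    · exact ⟨0, fun h => absurd h hx⟩
  choose ℓ hℓ using hlab
  obtain ⟨c, hc, hmono, hlast, hsurj⟩ := kuhn d (3 * m : ℕ) (by positivity) ℓ
    (fun x hx => (hℓ x hx).1) (fun x hx => (hℓ x hx).2.2.1) (fun x hx => (hℓ x hx).2.2.2)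
  have hle1 : ∀ s ≤ d, ∀ k, c s k ≤ c 0 k + 1 := fun s hs k => by
    rw [← hlast]; exact hmono s d hs k
  let lab : Fin (d + 1) → Fin (d + 1) := fun s =>
    ⟨ℓ (c s), Nat.lt_succ_of_le (hℓ _ (hc s (by omega))).1⟩
  have hlabsurj : Function.Surjective lab := fun l => by
    obtain ⟨s, hs, e⟩ := hsurj l (by omega)
    exact ⟨⟨s, by omega⟩, Fin.ext e⟩
  have hlabinj : Function.Injective lab := Finite.injective_iff_surjective.2 hlabsurj
  have hown : Function.Injective fun s : Fin (d + 1) => owner (c s) := by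
    -- Coordinate sums increase strictly along the cell, by at most `d` in total.
    have key : ∀ s t : Fin (d + 1), s < t → owner (c s) ≠ owner (c t) := by
      intro s t hst
      have hne : c s ≠ c t := fun he => hst.ne (hlabinj (Fin.ext (by simp only [lab, he])))
      have hle : c s ≤ c t := hmono s t (le_of_lt hst)
      apply owner_ne
      · obtain ⟨i, hi⟩ := (Pi.lt_def.1 (lt_of_le_of_ne hle hne)).2
        exact Finset.sum_lt_sum (fun i _ => hle i) ⟨i, Finset.mem_univ _, hi⟩
      · calc ∑ i, c t i ≤ ∑ i, (c s i + 1) := Finset.sum_le_sum fun i _ =>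
              (hle1 t (by omega) i).trans (add_le_add (hmono 0 s (Nat.zero_le _) i) le_rfl)
          _ = _ := by simp [Finset.sum_add_distrib]
    intro s t h
    rcases lt_trichotomy s t with hst | hst | hst
    · exact absurd h (key s t hst)
    · exact hst
    · exact absurd h.symm (key t s hst)
  let o : Equiv.Perm (Fin (d + 1)) := Equiv.ofBijective _ (Finite.injective_iff_bijective.1 hown)
  let L : Equiv.Perm (Fin (d + 1)) := Equiv.ofBijective lab ⟨hlabinj, hlabsurj⟩
  refine ⟨cuts (3 * m) (c 0), fun i => cuts (3 * m) (c (o.symm i)), o.symm.trans L, rfl,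
    cuts_last (hc 0 (Nat.zero_le _)), cuts_le_succ _ _, fun i k => ⟨?_, ?_⟩, fun i j => ?_⟩
  · exact cuts_mono _ (hmono 0 _ (Nat.zero_le _)) _
  · exact cuts_le_add_one (hle1 _ (by omega)) _
  · have h := (hℓ (c (o.symm i)) (hc _ (by omega))).2.1 (L (o.symm j)) (by omega)
    have ho : owner (c (o.symm i)) = i := o.apply_symm_apply i
    rw [ho] at h
    exact h

/-! ### The allocation -/

/-- For every instance with non-positive valuations there is a connected
allocation that is `EF1P_g^c`: `v_i⁺(A_i) ≥ v_i⁻(A_j)` for all `i, j`. -/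
theorem ef1pgc_exists_nonpos (n m : ℕ) (hn : 0 < n) (v : Fin n → Finset ℕ → ℤ)
    (hv0 : ∀ i, v i ∅ = 0)
    (hnonpos : ∀ i : Fin n, ∀ S ⊆ Finset.Icc 1 m, v i S ≤ 0) :
    ∃ A : Fin n → Finset ℕ,
      IsAllocation m A ∧ (∀ i, IsConnectedBundle (A i)) ∧
      ∀ i j : Fin n, vminus (v i) (A j) ≤ vplus (v i) (A i) := by
  classical
  rcases Nat.eq_zero_or_pos m with rfl | hm
  · refine ⟨fun _ => ∅, ⟨fun _ _ _ => disjoint_bot_left, by ext; simp⟩,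
      fun _ => ⟨1, 0, rfl⟩, fun _ _ => by simp [vminus, vplus]⟩
  obtain ⟨d, rfl⟩ : ∃ d, n = d + 1 := ⟨n - 1, by omega⟩
  obtain ⟨z, p, κ, hz0, hzlast, hzmono, hp, hpref⟩ := exists_rainbow_cell hm v hv0 hnonpos
  set C : ℕ → ℕ := fun k => z k / 3 + roundUp z k with hC
  have hCmono : Monotone C := monotone_nat_of_le_succ fun k => round_mono hz0 (hzmono k)
  have hC0 : C 0 = 0 := by simp [hC, hz0, roundUp]
  have hClast : C (d + 1) = m := by
    simp [hC, hzlast, roundUp_of_mod_zero (show z (d + 1) % 3 = 0 by omega)]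
  refine ⟨fun i => Finset.Ioc (C (κ i)) (C (κ i + 1)), ⟨fun i j hij => ?_, ?_⟩, fun i => ?_,
    fun i j => ?_⟩
  · have key : ∀ a b : ℕ, a < b →
        Disjoint (Finset.Ioc (C a) (C (a + 1))) (Finset.Ioc (C b) (C (b + 1))) := by
      intro a b hab
      rw [Finset.disjoint_left]
      intro x hxa hxb
      rw [Finset.mem_Ioc] at hxa hxb
      have := hCmono (show a + 1 ≤ b from hab)
      omega
    rcases lt_or_gt_of_ne (fun h => hij (κ.injective (Fin.ext h)) : (κ i : ℕ) ≠ κ j) with h | h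
    · exact key _ _ h
    · exact (key _ _ h).symm
  · ext x
    simp only [Finset.mem_biUnion, Finset.mem_univ, true_and, Finset.mem_Ioc, Finset.mem_Icc]
    constructor
    · rintro ⟨i, h1, h2⟩
      have := hCmono (show (κ i : ℕ) + 1 ≤ d + 1 by omega)
      omega
    · rintro ⟨h1, h2⟩
      -- The bundle containing `x` ends at the first cut that is at least `x`.
      have hex : ∃ k, x ≤ C k := ⟨d + 1, by omega⟩
      have hf := Nat.find_spec hex
      have hpos : Nat.find hex ≠ 0 := fun h => by rw [h, hC0] at hf; omega
      have hle : Nat.find hex ≤ d + 1 := Nat.find_min' hex (by omega)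
      have hlt := Nat.find_min hex (show Nat.find hex - 1 < Nat.find hex by omega)
      refine ⟨κ.symm ⟨Nat.find hex - 1, by omega⟩, ?_⟩
      rw [Equiv.apply_symm_apply]
      simp only [show Nat.find hex - 1 + 1 = Nat.find hex by omega]
      exact ⟨by omega, hf⟩
  · exact ⟨C (κ i) + 1, C (κ i + 1), by ext; simp⟩
  · exact (round_bounds (v i) (hv0 i) hz0 (κ j) (hp i _) (hp i _)).1.trans
      ((hpref i j).trans (round_bounds (v i) (hv0 i) hz0 (κ i) (hp i _) (hp i _)).2)
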